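/- (4-Bubble Theorem with density |x|.) Let 0 < M₁ ≤ M₂ ≤ M₃ ≤ M₄. Every configuration of 4 regions on ℝ with density |x| whose regions have weighted masses M₁, M₂, M₃, M₄ has total weighted perimeter at least √(2M₁) + √(2M₂) + √(2(M₁+M₃)) + √(2(M₂+M₄)). Moreover, the configuration consisting of the intervals [0, √(2M₁)] (region of mass M₁), [√(2M₁), √(2(M₁+M₃))] (region of mass M₃), [−√(2M₂), 0] (region of mass M₂), and [−√(2(M₂+M₄)), −√(2M₂)] (region of mass M₄) has exactly these weighted masses and total weighted perimeter exactly √(2M₁) + √(2M₂) + √(2(M₁+M₃)) + √(2(M₂+M₄)). -/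

import Mathlib

open MeasureTheory Finset

/-- A configuration of `n` regions made of `k` nondegenerate closed intervals
with pairwise disjoint interiors, each interval labeled by one of the regions. -/
structure Config (n k : ℕ) where
  lo : Fin k → ℝ
  hi : Fin k → ℝ
  lab : Fin k → Fin n
  nondeg : ∀ j, lo j < hi j
  disj : ∀ i j, i ≠ j → Set.Ioo (lo i) (hi i) ∩ Set.Ioo (lo j) (hi j) = ∅

namespace Config

variable {n k : ℕ}

/-- Weighted mass of region `i` with respect to the density `|x|`. -/
noncomputable def mass (C : Config n k) (i : Fin n) : ℝ :=
  ∑ j ∈ univ.filter (fun j => C.lab j = i), ∫ x in C.lo j..C.hi j, |x|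

/-- The (finite) set of all endpoints of intervals of the configuration. -/
noncomputable def endpointSet (C : Config n k) : Finset ℝ :=
  image C.lo univ ∪ image C.hi univ

/-- Total weighted perimeter with respect to the density `|x|`. -/
noncomputable def perim (C : Config n k) : ℝ :=
  ∑ x ∈ C.endpointSet, |x|

/-- A configuration is condensed if the union of its intervals is a closed interval
containing `0` and each region has at most one interval contained in `(-∞,0]`
and at most one interval contained in `[0,∞)`. -/
def Condensed (C : Config n k) : Prop :=
  (∃ a b : ℝ, a ≤ 0 ∧ 0 ≤ b ∧ (⋃ j, Set.Icc (C.lo j) (C.hi j)) = Set.Icc a b) ∧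
  ∀ i : Fin n,
    (univ.filter (fun j => C.lab j = i ∧ C.hi j ≤ 0)).card ≤ 1 ∧
    (univ.filter (fun j => C.lab j = i ∧ 0 ≤ C.lo j)).card ≤ 1

/-- A configuration is isoperimetric if its total weighted perimeter is least among all
configurations of `n` regions with the same list of weighted masses. -/
def Isoperimetric (C : Config n k) : Prop :=
  ∀ (k' : ℕ) (C' : Config n k'), (∀ i, C'.mass i = C.mass i) → C.perim ≤ C'.perim

end Config

namespace Config

variable {n k : ℕ}

/-- The weighted length of `[0, x]`, which vanishes when `x ≤ 0`. -/
noncomputable def posMass (x : ℝ) : ℝ := max x 0 ^ 2 / 2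

lemma posMass_mono : Monotone posMass := by
  intro x y h
  unfold posMass
  gcongr

lemma posMass_nonneg (x : ℝ) : 0 ≤ posMass x := by
  unfold posMass; positivity

lemma posMass_of_nonneg {x : ℝ} (h : 0 ≤ x) : posMass x = x ^ 2 / 2 := by
  simp [posMass, h]

lemma posMass_of_nonpos {x : ℝ} (h : x ≤ 0) : posMass x = 0 := by
  simp [posMass, h]

lemma integral_abs_zero (b : ℝ) : ∫ x in (0 : ℝ)..b, |x| = posMass b - posMass (-b) := by
  rcases le_total 0 b with h | h
  · have : ∫ x in (0 : ℝ)..b, |x| = ∫ x in (0 : ℝ)..b, x := by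
      apply intervalIntegral.integral_congr
      intro x hx
      rw [Set.uIcc_of_le h] at hx
      exact abs_of_nonneg hx.1
    rw [this, integral_id, posMass_of_nonneg h, posMass_of_nonpos (by linarith)]
    ring
  · have : ∫ x in (0 : ℝ)..b, |x| = ∫ x in (0 : ℝ)..b, -x := by
      apply intervalIntegral.integral_congr
      intro x hx
      rw [Set.uIcc_of_ge h] at hx
      exact abs_of_nonpos hx.2
    rw [this, intervalIntegral.integral_neg, integral_id, posMass_of_nonpos h,
      posMass_of_nonneg (by linarith)]
    ring

lemma integral_abs_eq (a b : ℝ) :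
    ∫ x in a..b, |x| = (posMass b - posMass a) + (posMass (-a) - posMass (-b)) := by
  have h : ∀ c d : ℝ, IntervalIntegrable (fun x : ℝ => |x|) volume c d :=
    fun c d => continuous_abs.intervalIntegrable c d
  rw [← intervalIntegral.integral_interval_sub_left (h 0 b) (h 0 a), integral_abs_zero,
    integral_abs_zero]
  ring

/-- The weighted mass of the part of region `i` lying in `[0, ∞)`. -/
noncomputable def rightMass (C : Config n k) (i : Fin n) : ℝ :=
  ∑ j ∈ univ.filter (fun j => C.lab j = i), (posMass (C.hi j) - posMass (C.lo j))

/-- The weighted perimeter carried by `[0, ∞)`. -/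
noncomputable def rightPerim (C : Config n k) : ℝ :=
  ∑ x ∈ C.endpointSet, max x 0

/-- The mirror image of a configuration. -/
def reflect (C : Config n k) : Config n k where
  lo j := -C.hi j
  hi j := -C.lo j
  lab := C.lab
  nondeg j := neg_lt_neg (C.nondeg j)
  disj i j hij := by
    ext x
    have := Set.eq_empty_iff_forall_notMem.1 (C.disj i j hij) (-x)
    simp only [Set.mem_inter_iff, Set.mem_Ioo, Set.mem_empty_iff_false, iff_false] at this ⊢
    rintro ⟨⟨h1, h2⟩, h3, h4⟩
    exact this ⟨⟨by linarith, by linarith⟩, by linarith, by linarith⟩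

lemma mass_eq (C : Config n k) (i : Fin n) :
    C.mass i = C.rightMass i + C.reflect.rightMass i := by
  simp only [mass, integral_abs_eq, Finset.sum_add_distrib]
  rfl

lemma rightMass_nonneg (C : Config n k) (i : Fin n) : 0 ≤ C.rightMass i :=
  Finset.sum_nonneg fun j _ => sub_nonneg.2 (posMass_mono (C.nondeg j).le)

lemma endpointSet_reflect (C : Config n k) :
    C.reflect.endpointSet = C.endpointSet.image (fun x => -x) := by
  simp only [endpointSet, reflect, Finset.image_union, Finset.image_image]
  rw [Finset.union_comm]
  rfl

lemma perim_eq (C : Config n k) : C.perim = C.rightPerim + C.reflect.rightPerim := by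
  rw [perim, rightPerim, rightPerim, endpointSet_reflect,
    Finset.sum_image (fun x _ y _ h => neg_injective h), ← Finset.sum_add_distrib]
  refine Finset.sum_congr rfl fun x _ => ?_
  rcases le_total 0 x with h | h
  · simp [h, abs_of_nonneg]
  · simp [h, abs_of_nonpos]

lemma hi_le_lo (C : Config n k) {i j : Fin k} (hij : i ≠ j) (h : C.hi i ≤ C.hi j) :
    C.hi i ≤ C.lo j := by
  by_contra! hlt
  obtain ⟨x, hx1, hx2⟩ := exists_between (max_lt hlt (C.nondeg i))
  have : x ∈ Set.Ioo (C.lo i) (C.hi i) ∩ Set.Ioo (C.lo j) (C.hi j) :=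
    ⟨⟨(le_max_right _ _).trans_lt hx1, hx2⟩, (le_max_left _ _).trans_lt hx1, hx2.trans_le h⟩
  rw [C.disj i j hij] at this
  exact this

lemma hi_injective (C : Config n k) : Function.Injective C.hi := by
  intro i j h
  by_contra hij
  exact absurd (C.hi_le_lo hij h.le) (by rw [h]; exact not_le.2 (C.nondeg j))

lemma sum_posMass_le (C : Config n k) (J : Finset (Fin k)) :
    ∀ t : ℝ, (∀ j ∈ J, C.hi j ≤ t) →
      ∑ j ∈ J, (posMass (C.hi j) - posMass (C.lo j)) ≤ posMass t := by
  induction J using Finset.induction_on_max_value C.hi with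
  | empty => intro t _; simpa using posMass_nonneg t
  | insert a s ha hmax ih =>
    intro t ht
    rw [Finset.sum_insert ha]
    have h1 := ih (C.lo a) fun j hj => C.hi_le_lo (fun h => ha (h ▸ hj)) (hmax j hj)
    have h2 := posMass_mono (ht a (Finset.mem_insert_self _ _))
    linarith

/-- The rightmost endpoint of region `i`, or `0` if the region has no mass in `[0, ∞)`. -/
noncomputable def rightEnd (C : Config n k) (i : Fin n) : ℝ :=
  (insert 0 ((univ.filter (fun j => C.lab j = i)).image C.hi)).max' (Finset.insert_nonempty _ _)

lemma rightEnd_nonneg (C : Config n k) (i : Fin n) : 0 ≤ C.rightEnd i :=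
  Finset.le_max' _ _ (Finset.mem_insert_self _ _)

lemma hi_le_rightEnd (C : Config n k) (j : Fin k) : C.hi j ≤ C.rightEnd (C.lab j) :=
  Finset.le_max' _ _ (Finset.mem_insert_of_mem (Finset.mem_image_of_mem _ (by simp)))

lemma rightEnd_eq (C : Config n k) (i : Fin n) :
    C.rightEnd i = 0 ∨ ∃ j, C.lab j = i ∧ C.hi j = C.rightEnd i := by
  have := Finset.max'_mem (insert 0 ((univ.filter (fun j => C.lab j = i)).image C.hi))
    (Finset.insert_nonempty _ _)
  simpa [rightEnd] using this

lemma sum_rightEnd_le (C : Config n k) : ∑ i, C.rightEnd i ≤ C.rightPerim := by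
  have hex : ∀ i ∈ univ.filter (fun i => C.rightEnd i ≠ 0),
      ∃ j, C.lab j = i ∧ C.hi j = C.rightEnd i := fun i hi =>
    (C.rightEnd_eq i).resolve_left (Finset.mem_filter.1 hi).2
  have hinj : Set.InjOn C.rightEnd (univ.filter (fun i => C.rightEnd i ≠ 0)) := by
    intro i hi i' hi' h
    obtain ⟨j, rfl, hj⟩ := hex i hi
    obtain ⟨j', rfl, hj'⟩ := hex i' hi'
    rw [C.hi_injective (hj.trans (h.trans hj'.symm))]
  calc ∑ i, C.rightEnd i = ∑ i ∈ univ.filter (fun i => C.rightEnd i ≠ 0), C.rightEnd i :=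
        (Finset.sum_filter_ne_zero _).symm
    _ = ∑ i ∈ univ.filter (fun i => C.rightEnd i ≠ 0), max (C.rightEnd i) 0 :=
        Finset.sum_congr rfl fun i _ => (max_eq_left (C.rightEnd_nonneg i)).symm
    _ = ∑ x ∈ (univ.filter (fun i => C.rightEnd i ≠ 0)).image C.rightEnd, max x 0 :=
        (Finset.sum_image (f := fun x : ℝ => max x 0) hinj).symm
    _ ≤ C.rightPerim := by
        refine Finset.sum_le_sum_of_subset_of_nonneg ?_ fun x _ _ => le_max_right _ _
        intro x hx
        obtain ⟨i, hi, rfl⟩ := Finset.mem_image.1 hx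
        obtain ⟨j, _, hj⟩ := hex i hi
        rw [← hj, endpointSet]
        exact Finset.mem_union_right _ (Finset.mem_image_of_mem _ (Finset.mem_univ j))

lemma sum_rightMass_le (C : Config n k) (I : Finset (Fin n)) (t : ℝ)
    (h : ∀ i ∈ I, C.rightEnd i ≤ t) : ∑ i ∈ I, C.rightMass i ≤ posMass t := by
  have : ∑ i ∈ I, C.rightMass i = ∑ j ∈ univ.filter (fun j => C.lab j ∈ I),
      (posMass (C.hi j) - posMass (C.lo j)) := by
    rw [← Finset.sum_fiberwise_of_maps_to (s := univ.filter (fun j => C.lab j ∈ I)) (t := I)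
      (g := C.lab) (fun j hj => (Finset.mem_filter.1 hj).2)]
    refine Finset.sum_congr rfl fun i hi => Finset.sum_congr ?_ fun _ _ => rfl
    ext j
    simp only [Finset.mem_filter, Finset.mem_univ, true_and]
    exact ⟨fun h => ⟨h ▸ hi, h⟩, fun h => h.2⟩
  rw [this]
  exact C.sum_posMass_le _ t fun j hj =>
    (C.hi_le_rightEnd j).trans (h _ (Finset.mem_filter.1 hj).2)

/-- Some ordering of the regions, filled from the origin outwards, does at least as well on
`[0, ∞)` as the given configuration. -/
lemma exists_perm_sum_sqrt_le (C : Config n k) :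
    ∃ σ : Equiv.Perm (Fin n),
      ∑ m, Real.sqrt (2 * ∑ l ∈ Finset.Iic m, C.rightMass (σ l)) ≤ C.rightPerim := by
  refine ⟨Tuple.sort C.rightEnd, le_trans ?_ C.sum_rightEnd_le⟩
  rw [← Equiv.sum_comp (Tuple.sort C.rightEnd) C.rightEnd]
  refine Finset.sum_le_sum fun m _ => Real.sqrt_le_iff.2 ⟨C.rightEnd_nonneg _, ?_⟩
  have := C.sum_rightMass_le ((Finset.Iic m).map (Tuple.sort C.rightEnd).toEmbedding)
    (C.rightEnd (Tuple.sort C.rightEnd m)) (by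
      intro i hi
      obtain ⟨l, hl, rfl⟩ := Finset.mem_map.1 hi
      exact Tuple.monotone_sort C.rightEnd (Finset.mem_Iic.1 hl))
  rw [posMass_of_nonneg (C.rightEnd_nonneg _), Finset.sum_map] at this
  simp only [Equiv.coe_toEmbedding] at this
  linarith

end Config

/-- The weighted perimeter of four adjacent intervals of weighted masses
`a (σ 0), …, a (σ 3)`, filled in this order from the origin outwards. -/
noncomputable def stackPerim (σ : Equiv.Perm (Fin 4)) (a : Fin 4 → ℝ) : ℝ :=
  ∑ m, Real.sqrt (2 * ∑ l ∈ Finset.Iic m, a (σ l))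

lemma stackPerim_mul (ρ σ : Equiv.Perm (Fin 4)) (a : Fin 4 → ℝ) :
    stackPerim (ρ * σ) a = stackPerim σ (a ∘ ρ) := rfl

lemma sum_Iic_le_sum_of_card {x : Fin 4 → ℝ} (hx : Monotone x) (m : Fin 4)
    (S : Finset (Fin 4)) (hS : S.card = (Finset.Iic m).card) :
    ∑ l ∈ Finset.Iic m, x l ≤ ∑ l ∈ S, x l := by
  -- exchange the part of `Iic m` outside `S` with the part of `S` outside `Iic m`
  rw [← Finset.sum_sdiff_le_sum_sdiff]
  have hc : (Finset.Iic m \ S).card = (S \ Finset.Iic m).card :=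
    Finset.card_sdiff_comm hS.symm
  calc ∑ l ∈ Finset.Iic m \ S, x l ≤ (Finset.Iic m \ S).card • x m :=
        Finset.sum_le_card_nsmul _ _ _ fun l hl =>
          hx (Finset.mem_Iic.1 (Finset.mem_sdiff.1 hl).1)
    _ = (S \ Finset.Iic m).card • x m := by rw [hc]
    _ ≤ ∑ l ∈ S \ Finset.Iic m, x l :=
        Finset.card_nsmul_le_sum _ _ _ fun l hl =>
          hx (le_of_lt (by simpa using (Finset.mem_sdiff.1 hl).2))

lemma stackPerim_one_le {x : Fin 4 → ℝ} (hx : Monotone x) (σ : Equiv.Perm (Fin 4)) :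
    stackPerim 1 x ≤ stackPerim σ x := by
  refine Finset.sum_le_sum fun m _ => Real.sqrt_le_sqrt ?_
  have := sum_Iic_le_sum_of_card hx m ((Finset.Iic m).map σ.toEmbedding) (Finset.card_map _)
  rw [Finset.sum_map] at this
  simp only [Equiv.coe_toEmbedding] at this
  simpa using this

lemma stackPerim_one_apply (x : Fin 4 → ℝ) :
    stackPerim 1 x = Real.sqrt (2 * x 0) + Real.sqrt (2 * (x 0 + x 1)) +
      Real.sqrt (2 * (x 0 + x 1 + x 2)) + Real.sqrt (2 * (x 0 + x 1 + x 2 + x 3)) := by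
  have h0 : Finset.Iic (0 : Fin 4) = {0} := by decide
  have h1 : Finset.Iic (1 : Fin 4) = {0, 1} := by decide
  have h2 : Finset.Iic (2 : Fin 4) = {0, 1, 2} := by decide
  have h3 : Finset.Iic (3 : Fin 4) = {0, 1, 2, 3} := by decide
  simp [stackPerim, Fin.sum_univ_four, h0, h1, h2, h3, add_assoc]

lemma stackPerim_ge (σ : Equiv.Perm (Fin 4)) (a : Fin 4 → ℝ) (i j k l : Fin 4)
    (hinj : Function.Injective ![i, j, k, l]) (hij : a i ≤ a j) (hjk : a j ≤ a k)
    (hkl : a k ≤ a l) :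
    Real.sqrt (2 * a i) + Real.sqrt (2 * (a i + a j)) + Real.sqrt (2 * (a i + a j + a k)) +
      Real.sqrt (2 * (a i + a j + a k + a l)) ≤ stackPerim σ a := by
  let ρ : Equiv.Perm (Fin 4) :=
    Equiv.ofBijective ![i, j, k, l] (Finite.injective_iff_bijective.1 hinj)
  have hmono : Monotone (a ∘ ρ) := by
    refine Fin.monotone_iff_le_succ.2 fun m => ?_
    fin_cases m
    · exact hij
    · exact hjk
    · exact hkl
  have h := stackPerim_one_le hmono (ρ⁻¹ * σ)
  rw [← stackPerim_mul ρ (ρ⁻¹ * σ), mul_inv_cancel_left, stackPerim_one_apply] at h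
  exact h

lemma concaveOn_stackPerim (σ : Equiv.Perm (Fin 4)) :
    ConcaveOn ℝ (Set.Ici (0 : Fin 4 → ℝ)) (stackPerim σ) := by
  refine ⟨convex_Ici 0, fun x hx y hy s t hs ht hst => ?_⟩
  simp only [stackPerim, smul_eq_mul, Finset.mul_sum, ← Finset.sum_add_distrib]
  refine Finset.sum_le_sum fun m _ => ?_
  have h := Real.strictConcaveOn_sqrt.concaveOn.2
    (x := ∑ l ∈ Finset.Iic m, 2 * x (σ l)) (y := ∑ l ∈ Finset.Iic m, 2 * y (σ l))
    (Finset.sum_nonneg fun l _ => mul_nonneg zero_le_two (hx (σ l)))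
    (Finset.sum_nonneg fun l _ => mul_nonneg zero_le_two (hy (σ l))) hs ht hst
  simp only [smul_eq_mul, Finset.mul_sum, ← Finset.sum_add_distrib] at h
  refine h.trans (le_of_eq ?_)
  congr 1
  refine Finset.sum_congr rfl fun l _ => ?_
  simp only [Pi.add_apply, Pi.smul_apply, smul_eq_mul]
  ring

lemma sqrt_add_sqrt_le {x y u v : ℝ} (hx : 0 ≤ x) (hu : x ≤ u) (hv : x ≤ v)
    (h : x + y ≤ u + v) :
    Real.sqrt (2 * x) + Real.sqrt (2 * y) ≤ Real.sqrt (2 * u) + Real.sqrt (2 * v) := by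
  have hy : Real.sqrt (2 * y) ≤ Real.sqrt (2 * (u + v - x)) :=
    Real.sqrt_le_sqrt (by linarith)
  have hz : 0 ≤ u + v - x := by linarith
  refine (add_le_add_right hy _).trans ?_
  refine abs_le_of_sq_le_sq' ?_ (by positivity) |>.2
  have key : Real.sqrt (2 * x) * Real.sqrt (2 * (u + v - x)) ≤
      Real.sqrt (2 * u) * Real.sqrt (2 * v) := by
    rw [← Real.sqrt_mul (by linarith), ← Real.sqrt_mul (by linarith)]
    exact Real.sqrt_le_sqrt (by nlinarith [mul_nonneg (sub_nonneg.2 hu) (sub_nonneg.2 hv)])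
  rw [add_sq, add_sq, Real.sq_sqrt (by linarith), Real.sq_sqrt (by linarith),
    Real.sq_sqrt (by linarith), Real.sq_sqrt (by linarith)]
  linarith

/-- The four-bubble bound when every region lies on a single side and region `0` is on the
first one. -/
lemma bound_le_of_unsplit {M₁ M₂ M₃ M₄ : ℝ} (h₁ : 0 < M₁) (h12 : M₁ ≤ M₂) (h23 : M₂ ≤ M₃)
    (h34 : M₃ ≤ M₄) (σ τ : Equiv.Perm (Fin 4)) (a b : Fin 4 → ℝ)
    (H0 : a 0 = M₁ ∧ b 0 = 0)
    (H1 : a 1 = 0 ∧ b 1 = M₂ ∨ a 1 = M₂ ∧ b 1 = 0)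
    (H2 : a 2 = 0 ∧ b 2 = M₃ ∨ a 2 = M₃ ∧ b 2 = 0)
    (H3 : a 3 = 0 ∧ b 3 = M₄ ∨ a 3 = M₄ ∧ b 3 = 0) :
    Real.sqrt (2 * M₁) + Real.sqrt (2 * M₂) + Real.sqrt (2 * (M₁ + M₃)) +
      Real.sqrt (2 * (M₂ + M₄)) ≤ stackPerim σ a + stackPerim τ b := by
  have mono : ∀ {x y : ℝ}, x ≤ y → Real.sqrt (2 * x) ≤ Real.sqrt (2 * y) := fun h =>
    Real.sqrt_le_sqrt (by linarith)
  obtain ⟨a0, b0⟩ := H0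
  rcases H1 with ⟨a1, b1⟩ | ⟨a1, b1⟩ <;> rcases H2 with ⟨a2, b2⟩ | ⟨a2, b2⟩ <;>
    rcases H3 with ⟨a3, b3⟩ | ⟨a3, b3⟩
  · have ha := stackPerim_ge σ a 1 2 3 0 (by decide) (by linarith) (by linarith) (by linarith)
    have hb := stackPerim_ge τ b 0 1 2 3 (by decide) (by linarith) (by linarith) (by linarith)
    simp only [a0, a1, a2, a3, b0, b1, b2, b3, zero_add, mul_zero, Real.sqrt_zero] at ha hb
    linarith [mono (show M₁ + M₃ ≤ M₂ + M₃ by linarith),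
      mono (show M₂ + M₄ ≤ M₂ + M₃ + M₄ by linarith)]
  · have ha := stackPerim_ge σ a 1 2 0 3 (by decide) (by linarith) (by linarith) (by linarith)
    have hb := stackPerim_ge τ b 0 3 1 2 (by decide) (by linarith) (by linarith) (by linarith)
    simp only [a0, a1, a2, a3, b0, b1, b2, b3, zero_add, mul_zero, Real.sqrt_zero] at ha hb
    linarith [sqrt_add_sqrt_le (x := M₁ + M₃) (y := M₂ + M₄) (u := M₁ + M₄) (v := M₂ + M₃)
      (by linarith) (by linarith) (by linarith) (by linarith)]
  · have ha := stackPerim_ge σ a 1 3 0 2 (by decide) (by linarith) (by linarith) (by linarith)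
    have hb := stackPerim_ge τ b 0 2 1 3 (by decide) (by linarith) (by linarith) (by linarith)
    simp only [a0, a1, a2, a3, b0, b1, b2, b3, zero_add, mul_zero, Real.sqrt_zero] at ha hb
    linarith
  · have ha := stackPerim_ge σ a 1 0 2 3 (by decide) (by linarith) (by linarith) (by linarith)
    have hb := stackPerim_ge τ b 0 2 3 1 (by decide) (by linarith) (by linarith) (by linarith)
    simp only [a0, a1, a2, a3, b0, b1, b2, b3, zero_add, mul_zero, Real.sqrt_zero] at ha hb
    linarith [mono (show M₂ + M₄ ≤ M₁ + M₃ + M₄ by linarith)]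
  · have ha := stackPerim_ge σ a 2 3 0 1 (by decide) (by linarith) (by linarith) (by linarith)
    have hb := stackPerim_ge τ b 0 1 2 3 (by decide) (by linarith) (by linarith) (by linarith)
    simp only [a0, a1, a2, a3, b0, b1, b2, b3, zero_add, mul_zero, Real.sqrt_zero] at ha hb
    linarith [sqrt_add_sqrt_le (x := M₂) (y := M₁ + M₃) (u := M₁ + M₂) (v := M₃)
      (by linarith) (by linarith) (by linarith) (by linarith),
      mono (show M₂ + M₄ ≤ M₃ + M₄ by linarith)]
  · have ha := stackPerim_ge σ a 2 0 1 3 (by decide) (by linarith) (by linarith) (by linarith)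
    have hb := stackPerim_ge τ b 0 1 3 2 (by decide) (by linarith) (by linarith) (by linarith)
    simp only [a0, a1, a2, a3, b0, b1, b2, b3, zero_add, mul_zero, Real.sqrt_zero] at ha hb
    linarith [sqrt_add_sqrt_le (x := M₂) (y := M₁ + M₃) (u := M₁ + M₂) (v := M₃)
      (by linarith) (by linarith) (by linarith) (by linarith),
      mono (show M₂ + M₄ ≤ M₁ + M₂ + M₄ by linarith)]
  · have ha := stackPerim_ge σ a 3 0 1 2 (by decide) (by linarith) (by linarith) (by linarith)
    have hb := stackPerim_ge τ b 0 1 2 3 (by decide) (by linarith) (by linarith) (by linarith)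
    simp only [a0, a1, a2, a3, b0, b1, b2, b3, zero_add, mul_zero, Real.sqrt_zero] at ha hb
    linarith [sqrt_add_sqrt_le (x := M₂) (y := M₁ + M₄) (u := M₁ + M₂) (v := M₄)
      (by linarith) (by linarith) (by linarith) (by linarith),
      sqrt_add_sqrt_le (x := M₁ + M₃) (y := M₂ + M₄) (u := M₁ + M₄) (v := M₁ + M₂ + M₃)
      (by linarith) (by linarith) (by linarith) (by linarith)]
  · have ha := stackPerim_ge σ a 0 1 2 3 (by decide) (by linarith) (by linarith) (by linarith)
    have hb : 0 ≤ stackPerim τ b := Finset.sum_nonneg fun _ _ => Real.sqrt_nonneg _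
    simp only [a0, a1, a2, a3] at ha
    linarith [mono (show M₂ ≤ M₁ + M₂ by linarith),
      mono (show M₁ + M₃ ≤ M₁ + M₂ + M₃ by linarith),
      mono (show M₂ + M₄ ≤ M₁ + M₂ + M₃ + M₄ by linarith)]

/-- The four-bubble bound for stacks of intervals on both sides of the origin: the perimeter is
concave in the way the masses are split, hence minimal when no region is split. -/
lemma bound_le_of_split {M₁ M₂ M₃ M₄ : ℝ} (h₁ : 0 < M₁) (h12 : M₁ ≤ M₂) (h23 : M₂ ≤ M₃)
    (h34 : M₃ ≤ M₄) (σ τ : Equiv.Perm (Fin 4)) (a b : Fin 4 → ℝ) (ha : ∀ i, 0 ≤ a i)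
    (hb : ∀ i, 0 ≤ b i) (hab : ∀ i, a i + b i = ![M₁, M₂, M₃, M₄] i) :
    Real.sqrt (2 * M₁) + Real.sqrt (2 * M₂) + Real.sqrt (2 * (M₁ + M₃)) +
      Real.sqrt (2 * (M₂ + M₄)) ≤ stackPerim σ a + stackPerim τ b := by
  set M : Fin 4 → ℝ := ![M₁, M₂, M₃, M₄]
  have hMnn : ∀ i, 0 ≤ M i := fun i => hab i ▸ add_nonneg (ha i) (hb i)
  have hconc : ConcaveOn ℝ (Set.Icc 0 M)
      (fun x => stackPerim σ x + stackPerim τ (M - x)) := by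
    refine ((concaveOn_stackPerim σ).subset Set.Icc_subset_Ici_self (convex_Icc 0 M)).add ?_
    refine ⟨convex_Icc 0 M, fun x hx y hy s t hs ht hst => ?_⟩
    have h := (concaveOn_stackPerim τ).2 (x := M - x) (y := M - y)
      (sub_nonneg.2 hx.2) (sub_nonneg.2 hy.2) hs ht hst
    have e : s • (M - x) + t • (M - y) = M - (s • x + t • y) := by
      rw [smul_sub, smul_sub, sub_add_sub_comm, ← add_smul, hst, one_smul]
    rwa [e] at h
  have hmem : a ∈ convexHull ℝ (Set.univ.pi fun i => ({0, M i} : Set ℝ)) := by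
    rw [convexHull_pi]
    intro i _
    beta_reduce
    rw [convexHull_pair, segment_eq_Icc (hMnn i)]
    exact ⟨ha i, by linarith [hab i, hb i]⟩
  obtain ⟨v, hv, hle⟩ := hconc.exists_le_of_mem_convexHull (by
    intro v hv
    refine ⟨fun i => ?_, fun i => ?_⟩ <;> rcases hv i (Set.mem_univ i) with h | h <;>
      simp_all) hmem
  have hb' : b = M - a := by
    ext i
    simp only [Pi.sub_apply]
    linarith [hab i]
  rw [hb']
  refine le_trans ?_ hle
  have hv' : ∀ i, v i = 0 ∧ (M - v) i = M i ∨ v i = M i ∧ (M - v) i = 0 := by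
    intro i
    rcases hv i (Set.mem_univ i) with h | h
    · exact Or.inl ⟨h, by simp [h]⟩
    · exact Or.inr ⟨h, by simp [Set.mem_singleton_iff.1 h]⟩
  rcases hv' 0 with h0 | h0
  · refine (bound_le_of_unsplit h₁ h12 h23 h34 τ σ (M - v) v h0.symm
      ((hv' 1).symm.imp And.symm And.symm) ((hv' 2).symm.imp And.symm And.symm)
      ((hv' 3).symm.imp And.symm And.symm)).trans (add_comm _ _).le
  · exact bound_le_of_unsplit h₁ h12 h23 h34 σ τ v (M - v) h0 (hv' 1) (hv' 2) (hv' 3)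

/-- The configuration of four adjacent intervals `[-s, -q], [-q, 0], [0, p], [p, r]`. -/
noncomputable def doubleStack (p r q s : ℝ) (hp : 0 < p) (hr : p < r) (hq : 0 < q)
    (hs : q < s) : Config 4 4 where
  lo := ![0, p, -q, -s]
  hi := ![p, r, 0, -q]
  lab := ![0, 2, 1, 3]
  nondeg j := by fin_cases j <;> simp <;> linarith
  disj i j hij := by
    ext x
    fin_cases i <;> fin_cases j <;> simp at hij ⊢ <;> intros <;> linarith

section doubleStack

variable {p r q s : ℝ} (hp : 0 < p) (hr : p < r) (hq : 0 < q) (hs : q < s)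

lemma doubleStack_mass_zero : (doubleStack p r q s hp hr hq hs).mass 0 = p ^ 2 / 2 := by
  rw [Config.mass, Finset.sum_filter, Fin.sum_univ_four]
  simp [doubleStack, Config.integral_abs_eq, Config.posMass, hp.le]

lemma doubleStack_mass_one : (doubleStack p r q s hp hr hq hs).mass 1 = q ^ 2 / 2 := by
  rw [Config.mass, Finset.sum_filter, Fin.sum_univ_four]
  simp [doubleStack, Config.integral_abs_eq, Config.posMass, hq.le]

lemma doubleStack_mass_two :
    (doubleStack p r q s hp hr hq hs).mass 2 = r ^ 2 / 2 - p ^ 2 / 2 := by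
  rw [Config.mass, Finset.sum_filter, Fin.sum_univ_four]
  simp [doubleStack, Config.integral_abs_eq, Config.posMass, hp.le,
    (hp.trans hr).le]

lemma doubleStack_mass_three :
    (doubleStack p r q s hp hr hq hs).mass 3 = s ^ 2 / 2 - q ^ 2 / 2 := by
  rw [Config.mass, Finset.sum_filter, Fin.sum_univ_four]
  simp [doubleStack, Config.integral_abs_eq, Config.posMass, hq.le,
    (hq.trans hs).le]

lemma doubleStack_perim : (doubleStack p r q s hp hr hq hs).perim = p + r + q + s := by
  have hE : (doubleStack p r q s hp hr hq hs).endpointSet = {0, p, r, -q, -s} := by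
    ext x
    simp only [Config.endpointSet, doubleStack, Finset.mem_union, Finset.mem_image,
      Finset.mem_univ, true_and, Fin.exists_fin_succ, Finset.mem_insert, Finset.mem_singleton]
    simp
    grind
  rw [Config.perim, hE, Finset.sum_insert, Finset.sum_insert, Finset.sum_insert,
    Finset.sum_insert, Finset.sum_singleton, abs_zero, abs_neg, abs_neg, abs_of_pos hp,
    abs_of_pos (hp.trans hr), abs_of_pos hq, abs_of_pos (hq.trans hs)]
  · ring
  all_goals
    simp only [Finset.mem_insert, Finset.mem_singleton, not_or]
    grind

end doubleStack


/-- 4-Bubble Theorem with density `|x|`: every configuration of four regions of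
weighted masses `0 < M₁ ≤ M₂ ≤ M₃ ≤ M₄` has total weighted perimeter at least
`√(2M₁) + √(2M₂) + √(2(M₁+M₃)) + √(2(M₂+M₄))`, and the configuration consisting of
`[0, √(2M₁)]` (mass `M₁`), `[√(2M₁), √(2(M₁+M₃))]` (mass `M₃`), `[-√(2M₂), 0]`
(mass `M₂`), and `[-√(2(M₂+M₄)), -√(2M₂)]` (mass `M₄`) achieves this bound with
exactly these masses. -/
theorem four_bubble (M₁ M₂ M₃ M₄ : ℝ)
    (h₁ : 0 < M₁) (h12 : M₁ ≤ M₂) (h23 : M₂ ≤ M₃) (h34 : M₃ ≤ M₄) :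
    (∀ (k : ℕ) (C : Config 4 k),
      (∃ σ : Equiv.Perm (Fin 4), ∀ i, C.mass (σ i) = ![M₁, M₂, M₃, M₄] i) →
      Real.sqrt (2 * M₁) + Real.sqrt (2 * M₂) + Real.sqrt (2 * (M₁ + M₃)) +
        Real.sqrt (2 * (M₂ + M₄)) ≤ C.perim) ∧
    (∃ C : Config 4 4,
      C.lo 0 = 0 ∧ C.hi 0 = Real.sqrt (2 * M₁) ∧ C.lab 0 = 0 ∧
      C.lo 1 = Real.sqrt (2 * M₁) ∧ C.hi 1 = Real.sqrt (2 * (M₁ + M₃)) ∧ C.lab 1 = 2 ∧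
      C.lo 2 = -Real.sqrt (2 * M₂) ∧ C.hi 2 = 0 ∧ C.lab 2 = 1 ∧
      C.lo 3 = -Real.sqrt (2 * (M₂ + M₄)) ∧ C.hi 3 = -Real.sqrt (2 * M₂) ∧
        C.lab 3 = 3 ∧
      C.mass 0 = M₁ ∧ C.mass 1 = M₂ ∧ C.mass 2 = M₃ ∧ C.mass 3 = M₄ ∧
      C.perim = Real.sqrt (2 * M₁) + Real.sqrt (2 * M₂) +
        Real.sqrt (2 * (M₁ + M₃)) + Real.sqrt (2 * (M₂ + M₄))) := by
  refine ⟨fun k C ⟨π, hπ⟩ => ?_, ?_⟩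
  · obtain ⟨σ, hσ⟩ := C.exists_perm_sum_sqrt_le
    obtain ⟨τ, hτ⟩ := C.reflect.exists_perm_sum_sqrt_le
    have h := bound_le_of_split h₁ h12 h23 h34 (π⁻¹ * σ) (π⁻¹ * τ) (C.rightMass ∘ π)
      (C.reflect.rightMass ∘ π) (fun i => C.rightMass_nonneg _)
      (fun i => C.reflect.rightMass_nonneg _) (fun i => by
        rw [← hπ i, C.mass_eq]; rfl)
    rw [← stackPerim_mul, ← stackPerim_mul, mul_inv_cancel_left, mul_inv_cancel_left] at h
    rw [C.perim_eq]
    exact h.trans (add_le_add hσ hτ)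
  · have hp : 0 < Real.sqrt (2 * M₁) := Real.sqrt_pos.2 (by linarith)
    have hr : Real.sqrt (2 * M₁) < Real.sqrt (2 * (M₁ + M₃)) :=
      Real.sqrt_lt_sqrt (by linarith) (by linarith)
    have hq : 0 < Real.sqrt (2 * M₂) := Real.sqrt_pos.2 (by linarith)
    have hs : Real.sqrt (2 * M₂) < Real.sqrt (2 * (M₂ + M₄)) :=
      Real.sqrt_lt_sqrt (by linarith) (by linarith)
    have sp : Real.sqrt (2 * M₁) ^ 2 = 2 * M₁ := Real.sq_sqrt (by linarith)
    have sr : Real.sqrt (2 * (M₁ + M₃)) ^ 2 = 2 * (M₁ + M₃) := Real.sq_sqrt (by linarith)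
    have sq : Real.sqrt (2 * M₂) ^ 2 = 2 * M₂ := Real.sq_sqrt (by linarith)
    have ss : Real.sqrt (2 * (M₂ + M₄)) ^ 2 = 2 * (M₂ + M₄) := Real.sq_sqrt (by linarith)
    refine ⟨doubleStack _ _ _ _ hp hr hq hs, rfl, rfl, rfl, rfl, rfl, rfl, rfl, rfl, rfl, rfl,
      rfl, rfl, ?_, ?_, ?_, ?_, ?_⟩
    · rw [doubleStack_mass_zero, sp]; ring
    · rw [doubleStack_mass_one, sq]; ring
    · rw [doubleStack_mass_two, sp, sr]; ring
    · rw [doubleStack_mass_three, sq, ss]; ring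
    · rw [doubleStack_perim]; ring
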